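/- arXiv:2401.03613 — 7 statements merged into one kernel-verified Lean document; each statement's English description precedes it below -/
import Mathlib

section
/- Let β', λ, c_a, c_f be positive reals and define the pull-based threshold cost C(τ) = ( β'·λ·c_a·τ²/2 + c_f ) / ( τ + 1/β' ) for τ ≥ 0. Then C attains its minimum over [0,∞) at τ* = (1/β')·( √(1 + 2·β'·c_f/(c_a·λ)) − 1 ), and the minimum value equals C(τ*) = c_a·λ·( √(1 + 2·β'·c_f/(c_a·λ)) − 1 ). -/
/-- Long-run average cost of the threshold-`τ` pull-based caching policy, where
`β'` is the item's request rate, `λ` the update rate, `c_a` the aging cost and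
`c_f` the fetching cost. -/
noncomputable def pullCost (β' lam ca cf : ℝ) (τ : ℝ) : ℝ :=
  (β' * lam * ca * τ ^ 2 / 2 + cf) / (τ + 1 / β')

section CompletedSquare

variable {β' lam ca cf s τ : ℝ}

/-- In the variable `u = β' * τ + 1` the cost is `ca * lam * ((u + s ^ 2 / u) / 2 - 1)`;
completing the square shows that `s` is the optimal value of `u`. -/
lemma pullCost_eq_add_sq_div (hβ' : β' ≠ 0) (hs : ca * lam * (s ^ 2 - 1) = 2 * β' * cf)
    (hτ : β' * τ + 1 ≠ 0) :
    pullCost β' lam ca cf τ =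
      ca * lam * (s - 1) + ca * lam * (β' * τ + 1 - s) ^ 2 / (2 * (β' * τ + 1)) := by
  have hden : τ + 1 / β' = (β' * τ + 1) / β' := by field_simp
  rw [pullCost, hden]
  field_simp
  linear_combination -hs

lemma mul_sub_one_le_pullCost (hβ' : β' ≠ 0) (hk : 0 ≤ ca * lam)
    (hs : ca * lam * (s ^ 2 - 1) = 2 * β' * cf) (hτ : 0 < β' * τ + 1) :
    ca * lam * (s - 1) ≤ pullCost β' lam ca cf τ := by
  rw [pullCost_eq_add_sq_div hβ' hs hτ.ne']
  exact le_add_of_nonneg_right (by positivity)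

lemma pullCost_one_div_mul_sub_one (hβ' : β' ≠ 0)
    (hs : ca * lam * (s ^ 2 - 1) = 2 * β' * cf) (hs₀ : s ≠ 0) :
    pullCost β' lam ca cf (1 / β' * (s - 1)) = ca * lam * (s - 1) := by
  have hu : β' * (1 / β' * (s - 1)) + 1 = s := by
    field_simp
    ring
  rw [pullCost_eq_add_sq_div hβ' hs (by rwa [hu]), hu]
  simp

end CompletedSquare

theorem pull_cost_optimal_threshold
    (β' lam ca cf : ℝ) (hβ' : 0 < β') (hlam : 0 < lam) (hca : 0 < ca) (hcf : 0 < cf) :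
    (∀ τ : ℝ, 0 ≤ τ →
        pullCost β' lam ca cf
            ((1 / β') * (Real.sqrt (1 + 2 * β' * cf / (ca * lam)) - 1)) ≤
          pullCost β' lam ca cf τ) ∧
      pullCost β' lam ca cf ((1 / β') * (Real.sqrt (1 + 2 * β' * cf / (ca * lam)) - 1)) =
        ca * lam * (Real.sqrt (1 + 2 * β' * cf / (ca * lam)) - 1) := by
  set s := Real.sqrt (1 + 2 * β' * cf / (ca * lam)) with hs_def
  have hs_pos : 0 < s := Real.sqrt_pos.2 (by positivity)
  have hs : ca * lam * (s ^ 2 - 1) = 2 * β' * cf := by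
    rw [hs_def, Real.sq_sqrt (by positivity), add_sub_cancel_left]
    exact mul_div_cancel₀ _ (by positivity)
  have hmin := pullCost_one_div_mul_sub_one hβ'.ne' hs hs_pos.ne'
  refine ⟨fun τ hτ ↦ ?_, hmin⟩
  rw [hmin]
  exact mul_sub_one_le_pullCost hβ'.ne' (by positivity) hs (by positivity)
end

section
/- For every real G > 9/8, there exists a real F with 1/2 < F < 1 satisfying F³ − 4(1+G)·F² + 4(1+2G)·F − 4G = 0. Consequently, the zero-gain threshold f* = 2F satisfies 1 < f* < 2. -/
/-!
The cubic is `F (2 - F)² - 4 G (1 - F)²`. At `F = 1` the term containing `G` vanishes and the value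
is `1`, while at any `a < 1` the value is negative as soon as `4 G (1 - a)²` exceeds `a (2 - a)²`.
The intermediate value theorem then gives a root in `(a, 1)`; for `a = 1 / 2` the condition on `G`
is exactly `9 / 8 < G`.
-/

/-- The cubic in the normalized demand-to-update ratio `F` whose zeros are the ratios at which the
optimal push-based and pull-based caching costs coincide, where `G` is four times the ratio of the
fetching cost to the aging cost. -/
def zeroGainCubic (G F : ℝ) : ℝ :=
  F ^ 3 - 4 * (1 + G) * F ^ 2 + 4 * (1 + 2 * G) * F - 4 * G

theorem zeroGainCubic_eq_sub (G F : ℝ) :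
    zeroGainCubic G F = F * (2 - F) ^ 2 - 4 * G * (1 - F) ^ 2 := by
  unfold zeroGainCubic
  ring

theorem zeroGainCubic_neg_iff {G F : ℝ} :
    zeroGainCubic G F < 0 ↔ F * (2 - F) ^ 2 < 4 * G * (1 - F) ^ 2 := by
  rw [zeroGainCubic_eq_sub, sub_neg]

theorem zeroGainCubic_one (G : ℝ) : zeroGainCubic G 1 = 1 := by
  rw [zeroGainCubic_eq_sub]
  ring

theorem continuous_zeroGainCubic (G : ℝ) : Continuous (zeroGainCubic G) := by
  unfold zeroGainCubic
  fun_prop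

theorem exists_mem_Ioo_zeroGainCubic_eq_zero {G a : ℝ} (ha : a < 1)
    (hG : a * (2 - a) ^ 2 < 4 * G * (1 - a) ^ 2) :
    ∃ F ∈ Set.Ioo a 1, zeroGainCubic G F = 0 := by
  have neg_left : zeroGainCubic G a < 0 := zeroGainCubic_neg_iff.mpr hG
  have pos_right : 0 < zeroGainCubic G 1 := one_pos.trans_eq (zeroGainCubic_one G).symm
  exact intermediate_value_Ioo ha.le (continuous_zeroGainCubic G).continuousOn
    ⟨neg_left, pos_right⟩

theorem zero_gain_threshold_exists (G : ℝ) (hG : 9 / 8 < G) :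
    ∃ F : ℝ, 1 / 2 < F ∧ F < 1 ∧
      F ^ 3 - 4 * (1 + G) * F ^ 2 + 4 * (1 + 2 * G) * F - 4 * G = 0 ∧
      1 < 2 * F ∧ 2 * F < 2 := by
  have threshold : (1 / 2 : ℝ) * (2 - 1 / 2) ^ 2 < 4 * G * (1 - 1 / 2) ^ 2 := by linarith
  obtain ⟨F, ⟨half_lt, lt_one⟩, root⟩ :=
    exists_mem_Ioo_zeroGainCubic_eq_zero one_half_lt_one threshold
  exact ⟨F, half_lt, lt_one, root, by linarith, by linarith⟩
end

section
/- Let β, p, λ, c_a, c_f be positive reals with 4·c_f/c_a > 9/8 and β·p ≤ λ. Then c_a·λ·( √(1 + 2·β·p·c_f/(λ·c_a)) − 1 ) < √(2·λ·β·p·c_a·c_f) − (1/2)·β·p·c_a; that is, the optimal pull-based caching cost is strictly smaller than the optimal push-based caching cost. -/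
/-!
In units of `ca * lam`, the pull cost is `√(1 + u) - 1` and the push cost is `√u - x / 2`, where
`x = β * p / lam` and `u = 2 * x * cf / ca`. Squaring turns the comparison of the two into
`x * (4 - x) < 4 * √u * (2 - x)`. With `t = √x`, the hypothesis on `cf / ca` says `3 * t < 4 * √u`,
so `t ^ 2 * (4 - t ^ 2) ≤ 3 * t * (2 - t ^ 2)` is enough. The bound `9 / 8` is the one for which
this holds with equality at the extreme demand `t = 1`.
-/

theorem sqrt_one_add_sq_sub_one_lt_sub_half_iff {s x : ℝ} (h : x / 2 < s + 1) :
    √(1 + s ^ 2) - 1 < s - x / 2 ↔ x * (4 - x) < 4 * s * (2 - x) := by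
  rw [sub_lt_iff_lt_add, Real.sqrt_lt' (by linarith)]
  constructor <;> intro hlt <;> linarith

theorem sq_mul_four_sub_sq_le {t : ℝ} (ht₀ : 0 ≤ t) (ht₁ : t ≤ 1) :
    t ^ 2 * (4 - t ^ 2) ≤ 3 * t * (2 - t ^ 2) := by
  have hquadratic : 0 ≤ 6 + 2 * t - t ^ 2 := by nlinarith
  have hfactor : 3 * t * (2 - t ^ 2) - t ^ 2 * (4 - t ^ 2) =
      t * (1 - t) * (6 + 2 * t - t ^ 2) := by ring
  rw [← sub_nonneg, hfactor]
  exact mul_nonneg (mul_nonneg ht₀ (sub_nonneg.2 ht₁)) hquadratic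

theorem sqrt_one_add_sub_one_lt_sqrt_sub_half {x u : ℝ} (hx₀ : 0 ≤ x) (hx₁ : x ≤ 1)
    (hxu : 9 / 16 * x < u) : √(1 + u) - 1 < √u - x / 2 := by
  have hu : 0 ≤ u := by linarith
  have hsqrt : 3 * √x < 4 * √u := by
    have : 3 / 4 * √x < √u := Real.lt_sqrt_of_sq_lt <| by
      rw [mul_pow, Real.sq_sqrt hx₀]
      linarith
    linarith
  have hthreshold : x * (4 - x) < 4 * √u * (2 - x) :=
    calc x * (4 - x) ≤ 3 * √x * (2 - x) := by
          simpa only [Real.sq_sqrt hx₀] using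
            sq_mul_four_sub_sq_le (Real.sqrt_nonneg x) (Real.sqrt_le_one.2 hx₁)
      _ < 4 * √u * (2 - x) := mul_lt_mul_of_pos_right hsqrt (by linarith)
  have hpos : x / 2 < √u + 1 := by linarith [Real.sqrt_nonneg u]
  simpa only [Real.sq_sqrt hu] using (sqrt_one_add_sq_sub_one_lt_sub_half_iff hpos).2 hthreshold

theorem sqrt_mul_eq_mul_sqrt_div (a : ℝ) {b : ℝ} (hb : 0 ≤ b) : √(a * b) = b * √(a / b) := by
  rw [Real.sqrt_mul' a hb, Real.sqrt_div' a hb, mul_div_left_comm, Real.div_sqrt]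

theorem pull_beats_push_of_low_demand
    (β p lam ca cf : ℝ) (hβ : 0 < β) (hp : 0 < p) (hlam : 0 < lam)
    (hca : 0 < ca) (hcf : 0 < cf) (hG : 4 * cf / ca > 9 / 8) (h : β * p ≤ lam) :
    ca * lam * (Real.sqrt (1 + 2 * β * p * cf / (lam * ca)) - 1) <
      Real.sqrt (2 * lam * β * p * ca * cf) - (1/2) * β * p * ca := by
  have hx_pos : 0 < β * p / lam := by positivity
  have hx_le_one : β * p / lam ≤ 1 := (div_le_one hlam).2 h
  have hxu : 9 / 16 * (β * p / lam) < 2 * β * p * cf / (lam * ca) :=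
    calc 9 / 16 * (β * p / lam) < 4 * cf / ca / 2 * (β * p / lam) :=
          mul_lt_mul_of_pos_right (by linarith) hx_pos
      _ = 2 * β * p * cf / (lam * ca) := by field_simp; ring
  have hpush : √(2 * lam * β * p * ca * cf) =
      lam * ca * √(2 * β * p * cf / (lam * ca)) := by
    rw [← sqrt_mul_eq_mul_sqrt_div _ (by positivity)]
    ring_nf
  calc ca * lam * (√(1 + 2 * β * p * cf / (lam * ca)) - 1)
      < ca * lam * (√(2 * β * p * cf / (lam * ca)) - β * p / lam / 2) :=
        mul_lt_mul_of_pos_left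
          (sqrt_one_add_sub_one_lt_sqrt_sub_half hx_pos.le hx_le_one hxu) (by positivity)
    _ = √(2 * lam * β * p * ca * cf) - (1/2) * β * p * ca := by
        rw [hpush]
        field_simp
end

section
/- Let β, p, λ, c_a, c_f be positive reals with β·p ≥ 2·λ. Then √(2·λ·β·p·c_a·c_f) − (1/2)·β·p·c_a < c_a·λ·( √(1 + 2·β·p·c_f/(λ·c_a)) − 1 ); that is, the optimal push-based caching cost is strictly smaller than the optimal pull-based caching cost. -/
/-!
Put `x = 2 * lam * β * p * ca * cf`, `a = ca * lam` and `b = β * p * ca / 2`. The push cost is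
`√x - b` and, once `a` is absorbed into the square root, the pull cost is `√(a ^ 2 + x) - a`. The
push cost thus has the smaller square root, and `β * p ≥ 2 * lam` says exactly that `a ≤ b`.
-/

theorem mul_sqrt_one_add_div_sq {a : ℝ} (ha : 0 < a) (x : ℝ) :
    a * √(1 + x / a ^ 2) = √(a ^ 2 + x) := by
  calc a * √(1 + x / a ^ 2)
      = √(a ^ 2) * √(1 + x / a ^ 2) := by rw [Real.sqrt_sq ha.le]
    _ = √(a ^ 2 * (1 + x / a ^ 2)) := (Real.sqrt_mul (sq_nonneg a) _).symm
    _ = √(a ^ 2 + x) := by rw [mul_one_add, mul_div_cancel₀ x (pow_ne_zero 2 ha.ne')]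

theorem sqrt_sub_lt_mul_sqrt_one_add_div_sq_sub_one {a b x : ℝ} (ha : 0 < a) (hab : a ≤ b)
    (hx : 0 ≤ x) : √x - b < a * (√(1 + x / a ^ 2) - 1) := by
  have hsqrt : √x < √(a ^ 2 + x) :=
    Real.sqrt_lt_sqrt hx (lt_add_of_pos_left x (pow_pos ha 2))
  calc √x - b < √(a ^ 2 + x) - a := by linarith
    _ = a * (√(1 + x / a ^ 2) - 1) := by rw [mul_sub_one, mul_sqrt_one_add_div_sq ha]

theorem push_beats_pull_of_high_demand
    (β p lam ca cf : ℝ) (hβ : 0 < β) (hp : 0 < p) (hlam : 0 < lam)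
    (hca : 0 < ca) (hcf : 0 < cf) (h : β * p ≥ 2 * lam) :
    Real.sqrt (2 * lam * β * p * ca * cf) - (1/2) * β * p * ca <
      ca * lam * (Real.sqrt (1 + 2 * β * p * cf / (lam * ca)) - 1) := by
  have hdemand : ca * lam ≤ 1 / 2 * β * p * ca := by
    linarith [mul_le_mul_of_nonneg_right h hca.le]
  have hratio : 2 * β * p * cf / (lam * ca) =
      2 * lam * β * p * ca * cf / (ca * lam) ^ 2 := by
    field_simp
  rw [hratio]
  exact sqrt_sub_lt_mul_sqrt_one_add_div_sq_sub_one (mul_pos hca hlam) hdemand (by positivity)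
end

section
/- Let w, c_f > 0 and q ∈ [0,1). Define v : ℕ → (ℕ → ℝ) by v₀(Δ) = 0 for all Δ, and v_m(Δ) = min( w·Δ + q·v_{m−1}(Δ+1), c_f + q·v_{m−1}(1) ) for m ≥ 1. Then for every m ≥ 0, the function Δ ↦ v_m(Δ) is nondecreasing on ℕ. -/
/-- Value-iteration iterates for the discounted push-based caching problem:
`pushValue w cf q m Δ` is the `m`-step value at age `Δ`, where `w = β·p·c_a` is the
per-step expected aging cost rate, `cf` the fetching cost and `q` the discount factor. -/
noncomputable def pushValue (w cf q : ℝ) : ℕ → ℕ → ℝ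
  | 0, _ => 0
  | m + 1, Δ =>
      min (w * (Δ : ℝ) + q * pushValue w cf q m (Δ + 1))
          (cf + q * pushValue w cf q m 1)

section ResetBellman

variable {S R : Type*} [Semiring R] [LinearOrder R]

/-- The Bellman operator of a discounted control problem with two actions: continuing, which costs
`c s` and moves the state from `s` to `next s`, and resetting, which costs `k` and moves it to the
fixed state `s₀`. For caching the state is the age, resetting means pushing a fresh copy, and
`s₀ = 1` since a pushed copy has missed one update by the next epoch. -/
def resetBellman (c : S → R) (next : S → S) (k : R) (s₀ : S) (q : R) (u : S → R) (s : S) : R :=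
  min (c s + q * u (next s)) (k + q * u s₀)

theorem monotone_resetBellman [IsOrderedRing R] [Preorder S] {c : S → R} {next : S → S} {q : R}
    {u : S → R} (hc : Monotone c) (hnext : Monotone next) (hq : 0 ≤ q) (hu : Monotone u)
    (k : R) (s₀ : S) : Monotone (resetBellman c next k s₀ q u) :=
  (hc.add ((hu.comp hnext).const_mul hq)).min monotone_const

theorem monotone_iterate_resetBellman [IsOrderedRing R] [Preorder S] {c : S → R} {next : S → S}
    {q : R} {u : S → R} (hc : Monotone c) (hnext : Monotone next) (hq : 0 ≤ q) (hu : Monotone u)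
    (k : R) (s₀ : S) (m : ℕ) : Monotone ((resetBellman c next k s₀ q)^[m] u) :=
  have maps_monotone : Set.MapsTo (resetBellman c next k s₀ q) {v | Monotone v} {v | Monotone v} :=
    fun _ hv => monotone_resetBellman hc hnext hq hv k s₀
  maps_monotone.iterate m hu

end ResetBellman

theorem pushValue_eq_iterate_resetBellman (w cf q : ℝ) (m : ℕ) :
    pushValue w cf q m = (resetBellman (fun Δ : ℕ => w * Δ) (· + 1) cf 1 q)^[m] 0 := by
  induction m with
  | zero => rfl
  | succ m ih =>
    rw [Function.iterate_succ_apply', ← ih]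
    rfl

theorem pushValue_monotone_general {w q : ℝ} (hw : 0 ≤ w) (hq : 0 ≤ q) (cf : ℝ) (m : ℕ) :
    Monotone (pushValue w cf q m) := by
  have aging_cost_monotone : Monotone fun Δ : ℕ => w * (Δ : ℝ) := Nat.mono_cast.const_mul hw
  have age_succ_monotone : Monotone fun Δ : ℕ => Δ + 1 := monotone_id.add_const 1
  rw [pushValue_eq_iterate_resetBellman]
  exact monotone_iterate_resetBellman aging_cost_monotone age_succ_monotone hq monotone_const
    cf 1 m

theorem pushValue_monotone (w cf q : ℝ) (hw : 0 < w) (hcf : 0 < cf)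
    (hq0 : 0 ≤ q) (hq1 : q < 1) :
    ∀ m : ℕ, Monotone (fun Δ : ℕ => pushValue w cf q m Δ) :=
  fun m => pushValue_monotone_general hw.le hq0 cf m
end

section
/- Let w, c_f > 0 and q ∈ [0,1), and define v₀(Δ) = 0 and v_m(Δ) = min( w·Δ + q·v_{m−1}(Δ+1), c_f + q·v_{m−1}(1) ) for m ≥ 1, Δ ∈ ℕ. Then for every m ≥ 1 the set { Δ ∈ ℕ : c_f + q·v_{m−1}(1) < w·Δ + q·v_{m−1}(Δ+1) } is upward closed in ℕ; equivalently, there exists a threshold η_m ∈ ℕ ∪ {∞} such that the update action strictly attains the minimum in v_m(Δ) exactly when Δ > η_m. -/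
theorem monotone_mul_natCast_add_mul_succ {R : Type*} [Semiring R] [PartialOrder R]
    [IsOrderedRing R] {w q : R} {v : ℕ → R} (hw : 0 ≤ w) (hq : 0 ≤ q) (hv : Monotone v) :
    Monotone fun Δ : ℕ => w * (Δ : R) + q * v (Δ + 1) :=
  (Nat.mono_cast.const_mul hw).add ((hv.comp Order.succ_mono).const_mul hq)

theorem monotone_pushValue {w q : ℝ} (cf : ℝ) (hw : 0 ≤ w) (hq : 0 ≤ q) (m : ℕ) :
    Monotone (pushValue w cf q m) := by
  induction m with
  | zero => exact monotone_const
  | succ m ih => exact (monotone_mul_natCast_add_mul_succ hw hq ih).min monotone_const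

theorem pushValue_update_set_upward_closed_general {w q : ℝ} (cf : ℝ) (hw : 0 ≤ w)
    (hq : 0 ≤ q) (m : ℕ) :
    IsUpperSet {Δ : ℕ | cf + q * pushValue w cf q m 1 <
      w * (Δ : ℝ) + q * pushValue w cf q m (Δ + 1)} :=
  (isUpperSet_Ioi _).preimage
    (monotone_mul_natCast_add_mul_succ hw hq (monotone_pushValue cf hw hq m))

/-- For each horizon `m ≥ 1`, the set of ages at which the update action strictly
attains the minimum in the value iteration is upward closed in `ℕ`; equivalently,
updating is strictly optimal exactly above a threshold `η_m ∈ ℕ ∪ {∞}`. -/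
theorem pushValue_update_set_upward_closed (w cf q : ℝ) (hw : 0 < w) (hcf : 0 < cf)
    (hq0 : 0 ≤ q) (hq1 : q < 1) :
    ∀ m : ℕ, 1 ≤ m → ∀ Δ Δ' : ℕ, Δ ≤ Δ' →
      cf + q * pushValue w cf q (m - 1) 1 <
          w * (Δ : ℝ) + q * pushValue w cf q (m - 1) (Δ + 1) →
        cf + q * pushValue w cf q (m - 1) 1 <
          w * (Δ' : ℝ) + q * pushValue w cf q (m - 1) (Δ' + 1) := by
  intro m _ Δ Δ' hΔ hupdate
  exact pushValue_update_set_upward_closed_general cf hw.le hq0 (m - 1) hΔ hupdate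
end

section
/- Let λ, c_a, c_f > 0 and γ ∈ [0,1). Define v : ℕ → (ℝ≥0 → ℝ) by v₀(s) = 0 for all s ≥ 0, and v_m(s) = min( λ·c_a·s + γ·v_{m−1}(s+1), c_f + γ·v_{m−1}(1) ) for m ≥ 1. Then for every m ≥ 0, the function s ↦ v_m(s) is nondecreasing on [0,∞). In particular v₁(s) = λ·c_a·s for s ≤ c_f/(λ·c_a) and v₁(s) = c_f for s > c_f/(λ·c_a). -/
/-- Value-iteration iterates for the discounted pull-based caching problem restricted to
request epochs: `pullValue lam ca cf γ m s` is the `m`-step value when the elapsed time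
since the last cache update is `s`, with update rate `lam`, aging cost `ca`, fetching
cost `cf` and discount factor `γ`. -/
noncomputable def pullValue (lam ca cf γ : ℝ) : ℕ → ℝ → ℝ
  | 0, _ => 0
  | m + 1, s =>
      min (lam * ca * s + γ * pullValue lam ca cf γ m (s + 1))
          (cf + γ * pullValue lam ca cf γ m 1)

/-- The Bellman operator of the pull-based caching problem, for an arbitrary cost `c s` of serving
from a cache of elapsed time `s`; value iteration for the linear aging cost iterates it from `0`. -/
noncomputable def pullBellman (c : ℝ → ℝ) (cf γ : ℝ) (v : ℝ → ℝ) (s : ℝ) : ℝ :=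
  min (c s + γ * v (s + 1)) (cf + γ * v 1)

theorem monotone_pullBellman {c v : ℝ → ℝ} (cf : ℝ) {γ : ℝ} (hγ : 0 ≤ γ) (hc : Monotone c)
    (hv : Monotone v) : Monotone (pullBellman c cf γ v) := by
  have hserve : Monotone fun s => c s + γ * v (s + 1) :=
    hc.add ((hv.comp add_left_mono).const_mul hγ)
  exact hserve.min monotone_const

theorem pullValue_succ (lam ca cf γ : ℝ) (m : ℕ) :
    pullValue lam ca cf γ (m + 1) =
      pullBellman (fun s => lam * ca * s) cf γ (pullValue lam ca cf γ m) := rfl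

theorem monotone_pullValue {lam ca γ : ℝ} (cf : ℝ) (haging : 0 ≤ lam * ca) (hγ : 0 ≤ γ) (m : ℕ) :
    Monotone (pullValue lam ca cf γ m) := by
  induction m with
  | zero => exact monotone_const
  | succ m ih =>
    rw [pullValue_succ]
    exact monotone_pullBellman cf hγ (monotone_id.const_mul haging) ih

theorem pullValue_one (lam ca cf γ s : ℝ) :
    pullValue lam ca cf γ 1 s = min (lam * ca * s) cf := by
  simp only [pullValue, mul_zero, add_zero]

section FirstIterate

variable {lam ca cf s : ℝ} (γ : ℝ)

theorem pullValue_one_of_le_div (haging : 0 < lam * ca) (hs : s ≤ cf / (lam * ca)) :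
    pullValue lam ca cf γ 1 s = lam * ca * s := by
  rw [pullValue_one]
  exact min_eq_left ((le_div_iff₀' haging).mp hs)

theorem pullValue_one_of_div_le (haging : 0 < lam * ca) (hs : cf / (lam * ca) ≤ s) :
    pullValue lam ca cf γ 1 s = cf := by
  rw [pullValue_one]
  exact min_eq_right ((div_le_iff₀' haging).mp hs)

end FirstIterate

theorem pullValue_monotone_general (lam ca cf γ : ℝ) (haging : 0 < lam * ca) (hγ : 0 ≤ γ) :
    (∀ m : ℕ, Monotone (pullValue lam ca cf γ m)) ∧
      (∀ s : ℝ, s ≤ cf / (lam * ca) → pullValue lam ca cf γ 1 s = lam * ca * s) ∧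
      (∀ s : ℝ, cf / (lam * ca) ≤ s → pullValue lam ca cf γ 1 s = cf) :=
  ⟨monotone_pullValue cf haging.le hγ, fun _ => pullValue_one_of_le_div γ haging,
    fun _ => pullValue_one_of_div_le γ haging⟩

theorem pullValue_monotone (lam ca cf γ : ℝ) (hlam : 0 < lam) (hca : 0 < ca)
    (hcf : 0 < cf) (hγ0 : 0 ≤ γ) (hγ1 : γ < 1) :
    (∀ m : ℕ, ∀ s s' : ℝ, 0 ≤ s → s ≤ s' →
        pullValue lam ca cf γ m s ≤ pullValue lam ca cf γ m s') ∧
      (∀ s : ℝ, 0 ≤ s → s ≤ cf / (lam * ca) →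
        pullValue lam ca cf γ 1 s = lam * ca * s) ∧
      (∀ s : ℝ, cf / (lam * ca) < s → pullValue lam ca cf γ 1 s = cf) := by
  obtain ⟨hmono, hserve, hfetch⟩ := pullValue_monotone_general lam ca cf γ (mul_pos hlam hca) hγ0
  exact ⟨fun m _ _ _ hs => hmono m hs, fun s _ => hserve s, fun s hs => hfetch s hs.le⟩
end
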